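/- Let θ ∈ ℝ, C > 0, and let {a_j} = {(a_j', a_{jn})} be a sequence in D_P with a_j → (0', e^{iθ}) as j → ∞ and P(a_j') ≤ C (1 − |a_{jn}|² − P(a_j')) for all j. Then liminf_{j→∞} σ_{D_P}(a_j) > 0. -/

import Mathlib

open Complex Metric Set

noncomputable section

/-- `ℂⁿ` with `n = N + 1`, carrying the Euclidean norm; points are written `z = (z', z_n)`
with `z' ∈ ℂᴺ` the first `N` coordinates and `z_n` the last coordinate. -/
abbrev CSp (N : ℕ) : Type := EuclideanSpace ℂ (Fin (N + 1))

variable {N : ℕ}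

/-- The last coordinate `z_n` of `z = (z', z_n)`. -/
def lastC (z : CSp N) : ℂ := z (Fin.last N)

/-- The first `N` coordinates `z'` of `z = (z', z_n)`. -/
def initC (z : CSp N) : Fin N → ℂ := fun j => z j.castSucc

/-- The point `(z', z_n) ∈ ℂⁿ`. -/
def mkPt (z' : Fin N → ℂ) (zn : ℂ) : CSp N :=
  WithLp.toLp 2 (Fin.snoc (α := fun _ => ℂ) z' zn)

/-- The weight `wt(K) = Σ_j k_j / (2 m_j)` of a multi-index `K` with respect to
`Λ = (1/m₁, …, 1/m_N)`. -/
def wt (m : Fin N → ℕ) (K : Fin N → ℕ) : ℝ := ∑ j, (K j : ℝ) / (2 * m j)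

/-- `P` is a real-valued weighted homogeneous polynomial of the form
`P(z') = Σ_{wt(K)=wt(L)=1/2} a_{KL} z'^K conj(z')^L` with `a_{KL} = conj (a_{LK})`. -/
def IsWHP (m : Fin N → ℕ) (P : (Fin N → ℂ) → ℝ) : Prop :=
  ∃ a : (Fin N → ℕ) → (Fin N → ℕ) → ℂ,
    {q : (Fin N → ℕ) × (Fin N → ℕ) | a q.1 q.2 ≠ 0}.Finite ∧
    (∀ K L, a K L = starRingEnd ℂ (a L K)) ∧
    (∀ K L, a K L ≠ 0 → wt m K = 1 / 2 ∧ wt m L = 1 / 2) ∧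
    (∀ z' : Fin N → ℂ, (P z' : ℂ) =
      ∑ᶠ K, ∑ᶠ L, a K L * (∏ j, z' j ^ K j) * ∏ j, starRingEnd ℂ (z' j) ^ L j)

/-- The general ellipsoid `D_P = {(z',z_n) : |z_n|² + P(z') < 1}`. -/
def DP (P : (Fin N → ℂ) → ℝ) : Set (CSp N) :=
  {z | ‖lastC z‖ ^ 2 + P (initC z) < 1}

/-- The squeezing function `σ_Ω(p)`: the supremum of all `r > 0` such that some holomorphic
embedding `f : Ω → 𝔹ⁿ` with `f p = 0` satisfies `B(0;r) ⊆ f(Ω)`. -/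
def sqf {n : ℕ} (Ω : Set (EuclideanSpace ℂ (Fin n))) (p : EuclideanSpace ℂ (Fin n)) : ℝ :=
  sSup {r : ℝ | 0 < r ∧ ∃ f : EuclideanSpace ℂ (Fin n) → EuclideanSpace ℂ (Fin n),
    DifferentiableOn ℂ f Ω ∧ InjOn f Ω ∧ f '' Ω ⊆ ball 0 1 ∧ f p = 0 ∧ ball 0 r ⊆ f '' Ω}

theorem whp_finite {m : Fin N → ℕ} {P : (Fin N → ℂ) → ℝ} (hP : IsWHP m P) :
    ∃ (a : (Fin N → ℕ) → (Fin N → ℕ) → ℂ) (S T : Finset (Fin N → ℕ)),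
      (∀ K L, a K L ≠ 0 → wt m K = 1 / 2 ∧ wt m L = 1 / 2) ∧
      ∀ z' : Fin N → ℂ, (P z' : ℂ) =
        ∑ K ∈ S, ∑ L ∈ T, a K L * (∏ j, z' j ^ K j) * ∏ j, starRingEnd ℂ (z' j) ^ L j := by
  classical
  obtain ⟨a, hfin, -, hwt, hsum⟩ := hP
  refine ⟨a, hfin.toFinset.image Prod.fst, hfin.toFinset.image Prod.snd, hwt, fun z' => ?_⟩
  have hz : ∀ K L, a K L ≠ 0 → K ∈ hfin.toFinset.image Prod.fst ∧
      L ∈ hfin.toFinset.image Prod.snd := by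
    intro K L h
    have h' : (K, L) ∈ hfin.toFinset := by simpa using h
    exact ⟨Finset.mem_image_of_mem Prod.fst h', Finset.mem_image_of_mem Prod.snd h'⟩
  have inner : ∀ K, (∑ᶠ L, a K L * (∏ j, z' j ^ K j) * ∏ j, starRingEnd ℂ (z' j) ^ L j)
      = ∑ L ∈ hfin.toFinset.image Prod.snd,
        a K L * (∏ j, z' j ^ K j) * ∏ j, starRingEnd ℂ (z' j) ^ L j := by
    intro K
    apply finsum_eq_sum_of_support_subset
    intro L hL
    refine (hz K L ?_).2
    intro h0
    apply hL
    simp [h0]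
  rw [hsum z']
  simp_rw [inner]
  apply finsum_eq_sum_of_support_subset
  intro K hK
  by_contra hcon
  apply hK
  refine Finset.sum_eq_zero fun L _ => ?_
  have : a K L = 0 := by
    by_contra h
    exact hcon (hz K L h).1
  simp [this]

theorem whp_cont {m : Fin N → ℕ} {P : (Fin N → ℂ) → ℝ} (hP : IsWHP m P) : Continuous P := by
  obtain ⟨a, S, T, -, h⟩ := whp_finite hP
  have h2 : P = fun z' => (∑ K ∈ S, ∑ L ∈ T,
      a K L * (∏ j, z' j ^ K j) * ∏ j, starRingEnd ℂ (z' j) ^ L j).re := by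
    funext z'
    rw [← h z']
    simp
  rw [h2]
  refine Complex.continuous_re.comp ?_
  refine continuous_finsetSum _ fun K _ => continuous_finsetSum _ fun L _ => ?_
  refine (continuous_const.mul ?_).mul ?_
  · exact continuous_finsetProd _ fun j _ => (continuous_apply j).pow _
  · exact continuous_finsetProd _ fun j _ =>
      (Complex.continuous_conj.comp (continuous_apply j)).pow _

theorem prod_exp {m : Fin N → ℕ} (hm : ∀ j, 0 < m j) (K : Fin N → ℕ) (hK : wt m K = 1 / 2)
    (l : ℂ) : ∏ j, Complex.exp (l / m j) ^ K j = Complex.exp l := by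
  have h1 : ∀ j, Complex.exp (l / m j) ^ K j = Complex.exp (l * (2 * ((K j : ℝ) / (2 * m j) : ℝ))) := by
    intro j
    rw [← Complex.exp_nat_mul]
    congr 1
    have : (m j : ℂ) ≠ 0 := by exact_mod_cast (hm j).ne'
    push_cast
    field_simp
  simp_rw [h1]
  rw [← Complex.exp_sum]
  congr 1
  rw [← Finset.mul_sum, ← Finset.mul_sum]
  unfold wt at hK
  rw [← Complex.ofReal_sum, hK]
  push_cast
  ring

theorem whp_scale {m : Fin N → ℕ} (hm : ∀ j, 0 < m j) {P : (Fin N → ℂ) → ℝ} (hP : IsWHP m P)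
    (l : ℂ) (z : Fin N → ℂ) :
    P (fun j => Complex.exp (l / m j) * z j) = ‖Complex.exp l‖ ^ 2 * P z := by
  obtain ⟨a, S, T, hwt, h⟩ := whp_finite hP
  have : ((P (fun j => Complex.exp (l / m j) * z j) : ℝ) : ℂ)
      = ((‖Complex.exp l‖ ^ 2 * P z : ℝ) : ℂ) := by
    rw [h]
    push_cast
    rw [h, ← Complex.mul_conj', Finset.mul_sum]
    refine Finset.sum_congr rfl fun K _ => ?_
    rw [Finset.mul_sum]
    refine Finset.sum_congr rfl fun L _ => ?_
    by_cases h0 : a K L = 0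
    · simp [h0]
    · obtain ⟨hK, hL⟩ := hwt K L h0
      have e1 := prod_exp hm K hK l
      have e2 := congrArg (starRingEnd ℂ) (prod_exp hm L hL l)
      rw [map_prod] at e2
      simp only [map_pow] at e2
      simp only [mul_pow, map_mul, Finset.prod_mul_distrib]
      rw [e1, e2]
      ring
  exact_mod_cast this

theorem whp_zero {m : Fin N → ℕ} (hm : ∀ j, 0 < m j) {P : (Fin N → ℂ) → ℝ} (hP : IsWHP m P) :
    P 0 = 0 := by
  have h := whp_scale hm hP (Real.log 2 : ℝ) 0
  rw [← Complex.ofReal_exp, Real.exp_log (by norm_num)] at h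
  have h2 : (fun j : Fin N => Complex.exp (((Real.log 2 : ℝ) : ℂ) / m j) * (0 : Fin N → ℂ) j) = 0 := by
    funext j; simp
  rw [h2] at h
  norm_num at h
  linarith

theorem whp_nonneg {m : Fin N → ℕ} (hm : ∀ j, 0 < m j) {P : (Fin N → ℂ) → ℝ} (hP : IsWHP m P)
    (hPpos : ∀ z' : Fin N → ℂ, z' ≠ 0 → 0 < P z') (z : Fin N → ℂ) : 0 ≤ P z := by
  by_cases h : z = 0
  · rw [h, whp_zero hm hP]
  · exact (hPpos z h).le

theorem whp_proper (hN : 1 ≤ N) {m : Fin N → ℕ} (hm : ∀ j, 0 < m j) {P : (Fin N → ℂ) → ℝ}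
    (hP : IsWHP m P) (hPpos : ∀ z' : Fin N → ℂ, z' ≠ 0 → 0 < P z') :
    ∃ M : ℝ, 1 ≤ M ∧ ∀ z, P z < 1 → ∀ j, ‖z j‖ ≤ M := by
  have : Nonempty (Fin N) := ⟨⟨0, hN⟩⟩
  have hne : (sphere (0 : Fin N → ℂ) 1).Nonempty :=
    ⟨fun _ => 1, by simp⟩
  obtain ⟨x0, hx0, hmin⟩ := (isCompact_sphere (0 : Fin N → ℂ) 1).exists_isMinOn hne
    (whp_cont hP).continuousOn
  have hx0' : x0 ≠ 0 := by
    rintro rfl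
    simp at hx0
  have hc := hPpos x0 hx0'
  set c := P x0
  refine ⟨max 1 (1 / c), le_max_left _ _, fun z hz => ?_⟩
  obtain ⟨i, hi⟩ := Finite.exists_max (fun j => ‖z j‖ ^ (2 * m j))
  have key : ‖z i‖ ^ (2 * m i) ≤ 1 / c := by
    by_cases h0 : z i = 0
    · rw [h0, norm_zero, zero_pow (by have := hm i; omega)]
      positivity
    have hzi : 0 < ‖z i‖ := norm_pos_iff.2 h0
    set ρ := ‖z i‖ ^ (2 * m i) with hρ
    have hρpos : 0 < ρ := by positivity
    have hs := whp_scale hm hP ((-(Real.log ρ) / 2 : ℝ) : ℂ) z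
    set w : Fin N → ℂ := fun j => Complex.exp (((-(Real.log ρ) / 2 : ℝ) : ℂ) / m j) * z j with hw
    have e1 : ‖Complex.exp ((-(Real.log ρ) / 2 : ℝ) : ℂ)‖ ^ 2 = 1 / ρ := by
      rw [Complex.norm_exp, Complex.ofReal_re, ← Real.exp_nat_mul]
      have : ((2 : ℕ) : ℝ) * (-(Real.log ρ) / 2) = - Real.log ρ := by push_cast; ring
      rw [this, Real.exp_neg, Real.exp_log hρpos, one_div]
    have e2 : ∀ j, ‖w j‖ ^ (2 * m j) = ‖z j‖ ^ (2 * m j) / ρ := by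
      intro j
      have hmj : (m j : ℝ) ≠ 0 := by exact_mod_cast (hm j).ne'
      simp only [hw]
      rw [norm_mul, mul_pow, Complex.norm_exp, ← Real.exp_nat_mul]
      have : (((-(Real.log ρ) / 2 : ℝ) : ℂ) / m j).re = (-(Real.log ρ) / 2) / m j := by
        rw [← Complex.ofReal_natCast, ← Complex.ofReal_div, Complex.ofReal_re]
      rw [this]
      have : ((2 * m j : ℕ) : ℝ) * ((-(Real.log ρ) / 2) / m j) = - Real.log ρ := by
        push_cast; field_simp
      rw [this, Real.exp_neg, Real.exp_log hρpos]
      field_simp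
    have e3 : ∀ j, ‖w j‖ ≤ 1 := by
      intro j
      have h1 : ‖w j‖ ^ (2 * m j) ≤ 1 := by
        rw [e2, div_le_one hρpos]
        exact hi j
      have := hm j
      exact (pow_le_one_iff_of_nonneg (norm_nonneg _) (by omega)).1 h1
    have e4 : ‖w i‖ = 1 := by
      have h1 : ‖w i‖ ^ (2 * m i) = 1 := by
        rw [e2]; exact div_self hρpos.ne'
      have := hm i
      exact (pow_eq_one_iff_of_nonneg (norm_nonneg _) (by omega)).1 h1
    have e5 : ‖w‖ = 1 := by
      apply le_antisymm
      · exact (pi_norm_le_iff_of_nonneg zero_le_one).2 e3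
      · rw [← e4]; exact norm_le_pi_norm w i
    have e6 : c ≤ P w := hmin (by simpa using e5)
    rw [hs, e1] at e6
    rw [le_div_iff₀ hc]
    have : c * ρ ≤ P z := by
      have := mul_le_mul_of_nonneg_right e6 hρpos.le
      have h3 : 1 / ρ * P z * ρ = P z := by field_simp
      linarith
    linarith
  intro j
  by_contra hcon
  push Not at hcon
  have h1 : 1 < ‖z j‖ := lt_of_le_of_lt (le_max_left _ _) hcon
  have h2 : 1 / c < ‖z j‖ := lt_of_le_of_lt (le_max_right _ _) hcon
  have h3 : ‖z j‖ ≤ ‖z j‖ ^ (2 * m j) := le_self_pow₀ h1.le (by have := hm j; omega)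
  have := hi j
  linarith

theorem initC_mkPt (z' : Fin N → ℂ) (w : ℂ) : initC (mkPt z' w) = z' := by
  funext j; simp [initC, mkPt]

theorem lastC_mkPt (z' : Fin N → ℂ) (w : ℂ) : lastC (mkPt z' w) = w := by
  simp [lastC, mkPt]

theorem ext_pt {z w : CSp N} (h1 : initC z = initC w) (h2 : lastC z = lastC w) : z = w := by
  ext j
  refine Fin.lastCases ?_ (fun i => ?_) j
  · exact h2
  · exact congrFun h1 i

theorem norm_pt_le {z : CSp N} {M : ℝ} (hM : 1 ≤ M) (h1 : ∀ j, ‖initC z j‖ ≤ M)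
    (h2 : ‖lastC z‖ ≤ M) : ‖z‖ ≤ (N + 1) * M := by
  rw [EuclideanSpace.norm_eq]
  apply Real.sqrt_le_iff.2
  constructor
  · positivity
  have : ∀ i : Fin (N + 1), ‖z i‖ ^ 2 ≤ M ^ 2 := by
    intro i
    gcongr
    refine Fin.lastCases ?_ (fun i => ?_) i
    · exact h2
    · exact h1 i
  calc ∑ i, ‖z i‖ ^ 2 ≤ ∑ i : Fin (N + 1), M ^ 2 := Finset.sum_le_sum fun i _ => this i
    _ = (N + 1) * M ^ 2 := by simp
    _ ≤ ((N + 1) * M) ^ 2 := by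
      rw [mul_pow]
      gcongr
      have : (0 : ℝ) ≤ N := Nat.cast_nonneg N
      nlinarith

/-- logarithmic scaling factor -/
def lam (a z : ℂ) : ℂ := ((Real.log (1 - ‖a‖ ^ 2) / 2 : ℝ) : ℂ) - Complex.log (1 - starRingEnd ℂ a * z)

/-- The automorphism of `D_P` -/
def aut (m : Fin N → ℕ) (a : ℂ) (z : CSp N) : CSp N :=
  mkPt (fun j => Complex.exp (lam a (lastC z) / m j) * initC z j)
    ((lastC z - a) / (1 - starRingEnd ℂ a * lastC z))

theorem den_re_pos {a z : ℂ} (ha : ‖a‖ < 1) (hz : ‖z‖ < 1) : 0 < (1 - starRingEnd ℂ a * z).re := by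
  have h1 : (starRingEnd ℂ a * z).re ≤ ‖starRingEnd ℂ a * z‖ := Complex.re_le_norm _
  rw [norm_mul, Complex.norm_conj] at h1
  have h2 : ‖a‖ * ‖z‖ < 1 := by nlinarith [norm_nonneg a, norm_nonneg z]
  simp only [Complex.sub_re, Complex.one_re]
  linarith

theorem den_ne {a z : ℂ} (ha : ‖a‖ < 1) (hz : ‖z‖ < 1) : 1 - starRingEnd ℂ a * z ≠ 0 := by
  intro h
  have := den_re_pos ha hz
  rw [h] at this
  simp at this

theorem norm_exp_lam {a z : ℂ} (ha : ‖a‖ < 1) (hz : ‖z‖ < 1) :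
    ‖Complex.exp (lam a z)‖ ^ 2 = (1 - ‖a‖ ^ 2) / ‖1 - starRingEnd ℂ a * z‖ ^ 2 := by
  have hpos : 0 < 1 - ‖a‖ ^ 2 := by nlinarith [norm_nonneg a]
  unfold lam
  rw [Complex.exp_sub, Complex.exp_log (den_ne ha hz), norm_div, div_pow, Complex.norm_exp,
    Complex.ofReal_re, ← Real.exp_nat_mul]
  have : ((2 : ℕ) : ℝ) * (Real.log (1 - ‖a‖ ^ 2) / 2) = Real.log (1 - ‖a‖ ^ 2) := by
    push_cast; ring
  rw [this, Real.exp_log hpos]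

theorem mobius_id {a z : ℂ} (ha : ‖a‖ < 1) (hz : ‖z‖ < 1) :
    1 - ‖(z - a) / (1 - starRingEnd ℂ a * z)‖ ^ 2
      = (1 - ‖a‖ ^ 2) / ‖1 - starRingEnd ℂ a * z‖ ^ 2 * (1 - ‖z‖ ^ 2) := by
  have hn : ‖1 - starRingEnd ℂ a * z‖ ^ 2 ≠ 0 := pow_ne_zero _ (norm_ne_zero_iff.2 (den_ne ha hz))
  have key : ‖1 - starRingEnd ℂ a * z‖ ^ 2 - ‖z - a‖ ^ 2 = (1 - ‖a‖ ^ 2) * (1 - ‖z‖ ^ 2) := by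
    simp only [Complex.sq_norm, Complex.normSq_apply]
    simp
    ring
  rw [norm_div, div_pow, div_mul_eq_mul_div, ← key, sub_div, div_self hn]

theorem aut_id {m : Fin N → ℕ} (hm : ∀ j, 0 < m j) {P : (Fin N → ℂ) → ℝ} (hP : IsWHP m P)
    {a : ℂ} (ha : ‖a‖ < 1) {z : CSp N} (hz : ‖lastC z‖ < 1) :
    1 - ‖lastC (aut m a z)‖ ^ 2 - P (initC (aut m a z))
      = (1 - ‖a‖ ^ 2) / ‖1 - starRingEnd ℂ a * lastC z‖ ^ 2
        * (1 - ‖lastC z‖ ^ 2 - P (initC z)) := by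
  unfold aut
  rw [lastC_mkPt, initC_mkPt, whp_scale hm hP, norm_exp_lam ha hz, mobius_id ha hz]
  ring

theorem aut_mem {m : Fin N → ℕ} (hm : ∀ j, 0 < m j) {P : (Fin N → ℂ) → ℝ} (hP : IsWHP m P)
    {a : ℂ} (ha : ‖a‖ < 1) {z : CSp N} (hz : ‖lastC z‖ < 1) :
    aut m a z ∈ DP P ↔ z ∈ DP P := by
  have h := aut_id hm hP ha hz
  have hpos : 0 < 1 - ‖a‖ ^ 2 := by nlinarith [norm_nonneg a]
  have hn : 0 < ‖1 - starRingEnd ℂ a * lastC z‖ := norm_pos_iff.2 (den_ne ha hz)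
  have hq : 0 < (1 - ‖a‖ ^ 2) / ‖1 - starRingEnd ℂ a * lastC z‖ ^ 2 := by positivity
  have h2 := mul_pos_iff_of_pos_left hq (b := 1 - ‖lastC z‖ ^ 2 - P (initC z))
  rw [← h] at h2
  unfold DP
  simp only [mem_ofPred_eq]
  constructor
  · intro h3
    have := h2.1 (by linarith)
    linarith
  · intro h3
    have := h2.2 (by linarith)
    linarith

theorem aut_inj {m : Fin N → ℕ} {a : ℂ} (ha : ‖a‖ < 1) {z w : CSp N} (hz : ‖lastC z‖ < 1)
    (hw : ‖lastC w‖ < 1) (h : aut m a z = aut m a w) : z = w := by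
  have h1 := congrArg initC h
  have h2 := congrArg lastC h
  unfold aut at h1 h2
  rw [initC_mkPt, initC_mkPt] at h1
  rw [lastC_mkPt, lastC_mkPt, div_eq_div_iff (den_ne ha hz) (den_ne ha hw)] at h2
  have hl : lastC z = lastC w := by
    have h3 : (1 - a * starRingEnd ℂ a) * (lastC z - lastC w) = 0 := by linear_combination h2
    rcases mul_eq_zero.1 h3 with h4 | h4
    · exfalso
      exact den_ne ha ha (by rw [mul_comm]; exact h4)
    · exact sub_eq_zero.1 h4
  refine ext_pt ?_ hl
  funext j
  have h5 := congrFun h1 j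
  simp only [hl] at h5
  exact mul_left_cancel₀ (Complex.exp_ne_zero _) h5

theorem aut_surj {m : Fin N → ℕ} {a : ℂ} (ha : ‖a‖ < 1) {w : CSp N}
    (hw : ‖lastC w‖ < 1) : ∃ z : CSp N, ‖lastC z‖ < 1 ∧ aut m a z = w := by
  have ha' : ‖-a‖ < 1 := by simpa using ha
  have hpos : 0 < 1 - ‖a‖ ^ 2 := by nlinarith [norm_nonneg a]
  set v : ℂ := (lastC w - -a) / (1 - starRingEnd ℂ (-a) * lastC w) with hv
  have hd := den_ne ha' hw
  have hvn : ‖v‖ < 1 := by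
    have h := mobius_id ha' hw
    rw [norm_neg, ← hv] at h
    have hn : 0 < ‖1 - starRingEnd ℂ (-a) * lastC w‖ := norm_pos_iff.2 hd
    have hp : 0 < 1 - ‖lastC w‖ ^ 2 := by nlinarith [norm_nonneg (lastC w)]
    have : 0 < 1 - ‖v‖ ^ 2 := by rw [h]; positivity
    nlinarith [norm_nonneg v]
  refine ⟨mkPt (fun j => Complex.exp (-(lam a v / m j)) * initC w j) v, ?_, ?_⟩
  · rwa [lastC_mkPt]
  · apply ext_pt
    · unfold aut
      rw [initC_mkPt, lastC_mkPt, initC_mkPt]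
      funext j
      rw [← mul_assoc, ← Complex.exp_add]
      simp
    · unfold aut
      rw [lastC_mkPt, lastC_mkPt]
      rw [div_eq_iff (den_ne ha hvn)]
      have hv2 : v * (1 - starRingEnd ℂ (-a) * lastC w) = lastC w - -a := by
        rw [hv]; exact div_mul_cancel₀ _ hd
      simp only [map_neg] at hv2
      linear_combination hv2

theorem lastC_diff : Differentiable ℂ (lastC : CSp N → ℂ) := by
  unfold lastC; fun_prop

theorem initC_diff : Differentiable ℂ (initC : CSp N → Fin N → ℂ) := by
  unfold initC; fun_prop

theorem aut_diff {m : Fin N → ℕ} {a : ℂ} (ha : ‖a‖ < 1) {z : CSp N} (hz : ‖lastC z‖ < 1) :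
    DifferentiableAt ℂ (aut m a) z := by
  have hl : DifferentiableAt ℂ (fun z : CSp N => lastC z) z := lastC_diff z
  have hd : DifferentiableAt ℂ (fun z : CSp N => 1 - starRingEnd ℂ a * lastC z) z :=
    (hl.const_mul _).const_sub _
  have hlam : DifferentiableAt ℂ (fun z : CSp N => lam a (lastC z)) z := by
    unfold lam
    exact (hd.clog (Or.inl (den_re_pos ha hz))).const_sub _
  rw [differentiableAt_euclidean]
  intro i
  refine Fin.lastCases ?_ (fun i => ?_) i
  · have : (fun x : CSp N => aut m a x (Fin.last N)) =
        fun z => (lastC z - a) / (1 - starRingEnd ℂ a * lastC z) := by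
      funext x; exact lastC_mkPt _ _
    rw [this]
    simp only [div_eq_mul_inv]
    have h1 : DifferentiableAt ℂ (fun z : CSp N => lastC z - a) z := hl.sub_const a
    have h2 : DifferentiableAt ℂ (fun z : CSp N => (1 - starRingEnd ℂ a * lastC z)⁻¹) z :=
      DifferentiableAt.fun_inv hd (den_ne ha hz)
    exact DifferentiableAt.fun_mul h1 h2
  · have : (fun x : CSp N => aut m a x i.castSucc) =
        fun z => Complex.exp (lam a (lastC z) / m i) * initC z i := by
      funext x; exact congrFun (initC_mkPt _ _) i
    rw [this]
    have h1 : DifferentiableAt ℂ (fun z : CSp N => lam a (lastC z) / (m i : ℂ)) z := by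
      simp only [div_eq_mul_inv]
      exact DifferentiableAt.mul_const hlam _
    have h2 : DifferentiableAt ℂ (fun z : CSp N => initC z i) z :=
      differentiableAt_pi.1 (initC_diff z) i
    exact DifferentiableAt.fun_mul h1.cexp h2

theorem sqf_bdd {n : ℕ} (Ω : Set (EuclideanSpace ℂ (Fin (n + 1)))) (p : EuclideanSpace ℂ (Fin (n + 1))) :
    ∀ r ∈ {r : ℝ | 0 < r ∧ ∃ f : EuclideanSpace ℂ (Fin (n + 1)) → EuclideanSpace ℂ (Fin (n + 1)),
    DifferentiableOn ℂ f Ω ∧ InjOn f Ω ∧ f '' Ω ⊆ ball 0 1 ∧ f p = 0 ∧ ball 0 r ⊆ f '' Ω}, r ≤ 1 := by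
  rintro r ⟨hr, f, -, -, h1, -, h2⟩
  by_contra hcon
  push Not at hcon
  have : EuclideanSpace.single (Fin.last n) (1 : ℂ) ∈ ball (0 : EuclideanSpace ℂ (Fin (n + 1))) r := by
    simpa using hcon
  have := h1 (h2 this)
  simp at this

/-- Let `θ ∈ ℝ`, `C > 0`, and `{a_j} = {(a_j', a_{jn})}` a sequence in `D_P` with
`a_j → (0', e^{iθ})` and `P(a_j') ≤ C (1 - |a_{jn}|² - P(a_j'))` for all `j`.
Then `liminf_{j→∞} σ_{D_P}(a_j) > 0`. -/
theorem stmt19 {N : ℕ} (hN : 1 ≤ N) (m : Fin N → ℕ) (hm : ∀ j, 0 < m j)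
    (P : (Fin N → ℂ) → ℝ) (hP : IsWHP m P)
    (hPpos : ∀ z' : Fin N → ℂ, z' ≠ 0 → 0 < P z')
    (θ C : ℝ) (hC : 0 < C)
    (a : ℕ → CSp N) (ha : ∀ j, a j ∈ DP P)
    (hconv : Filter.Tendsto a Filter.atTop
      (nhds (EuclideanSpace.single (Fin.last N) (Complex.exp (θ * Complex.I)))))
    (hineq : ∀ j, P (initC (a j)) ≤
      C * (1 - ‖lastC (a j)‖ ^ 2 - P (initC (a j)))) :
    0 < Filter.liminf (fun j => sqf (DP P) (a j)) Filter.atTop := by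
  have hnn := whp_nonneg hm hP hPpos
  have hcont := whp_cont hP
  obtain ⟨M, hM1, hM⟩ := whp_proper hN hm hP hPpos
  have hlast : ∀ z ∈ DP P, ‖lastC z‖ < 1 := by
    intro z hz
    have h1 : ‖lastC z‖ ^ 2 + P (initC z) < 1 := hz
    nlinarith [hnn (initC z), norm_nonneg (lastC z)]
  have hinit : ∀ z ∈ DP P, P (initC z) < 1 := by
    intro z hz
    have h1 : ‖lastC z‖ ^ 2 + P (initC z) < 1 := hz
    nlinarith [sq_nonneg ‖lastC z‖]
  set R : ℝ := (N + 1) * M with hR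
  have hRpos : 0 < R := by positivity
  have hbd : ∀ z ∈ DP P, ‖z‖ ≤ R := fun z hz =>
    norm_pt_le hM1 (hM _ (hinit z hz)) ((hlast z hz).le.trans hM1)
  have hlc : Continuous (lastC : CSp N → ℂ) := lastC_diff.continuous
  have hic : Continuous (initC : CSp N → Fin N → ℂ) := initC_diff.continuous
  have hopen : IsOpen (DP P) := by
    unfold DP
    exact isOpen_lt ((hlc.norm.pow 2).add (hcont.comp hic)) continuous_const
  let Kc : Set (CSp N) := {z | lastC z = 0 ∧ P (initC z) ≤ C / (1 + C)}
  have hC1 : C / (1 + C) < 1 := by rw [div_lt_one (by linarith)]; linarith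
  have hKD : Kc ⊆ DP P := by
    rintro z ⟨h1, h2⟩
    change ‖lastC z‖ ^ 2 + P (initC z) < 1
    rw [h1]
    simp
    linarith
  have hKcl : IsClosed Kc :=
    (isClosed_eq hlc continuous_const).inter (isClosed_le (hcont.comp hic) continuous_const)
  have hKc : IsCompact Kc := by
    refine Metric.isCompact_of_isClosed_isBounded hKcl ?_
    refine (Metric.isBounded_closedBall (x := (0 : CSp N)) (r := R)).subset fun z hz => ?_
    simpa using hbd z (hKD hz)
  obtain ⟨δ, hδ, hthick⟩ := hKc.exists_thickening_subset_open hopen hKD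
  have hball : ∀ b ∈ Kc, ball b δ ⊆ DP P := fun b hb =>
    (Metric.ball_subset_thickening hb δ).trans hthick
  have hS : 0 < 3 * R := by positivity
  have main : ∀ j, δ / (3 * R) ≤ sqf (DP P) (a j) := by
    intro j
    have haj := hlast _ (ha j)
    set α := lastC (a j) with hα
    set b := aut m α (a j) with hb
    have hbD : b ∈ DP P := (aut_mem hm hP haj haj).2 (ha j)
    have hbK : b ∈ Kc := by
      have hb0 : lastC b = 0 := by
        rw [hb]; unfold aut; rw [lastC_mkPt, ← hα]; simp
      refine ⟨hb0, ?_⟩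
      have hpos : 0 < 1 - ‖α‖ ^ 2 := by nlinarith [norm_nonneg α]
      have hden : ‖1 - starRingEnd ℂ α * α‖ ^ 2 = (1 - ‖α‖ ^ 2) ^ 2 := by
        rw [Complex.conj_mul']
        have : (1 : ℂ) - (‖α‖ : ℂ) ^ 2 = ((1 - ‖α‖ ^ 2 : ℝ) : ℂ) := by push_cast; ring
        rw [this, Complex.norm_real, Real.norm_eq_abs, sq_abs]
      have hid := aut_id hm hP haj haj (z := a j)
      rw [← hb, hb0, ← hα, hden] at hid
      have h2 := hineq j
      rw [← hα] at h2
      set p := P (initC (a j))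
      have h3 : P (initC b) = p / (1 - ‖α‖ ^ 2) := by
        have : (1 - ‖α‖ ^ 2) / (1 - ‖α‖ ^ 2) ^ 2 * (1 - ‖α‖ ^ 2 - p)
            = 1 - p / (1 - ‖α‖ ^ 2) := by
          field_simp
        rw [this] at hid
        simp at hid
        linarith
      rw [h3, div_le_div_iff₀ hpos (by linarith)]
      nlinarith
    refine le_csSup ⟨1, sqf_bdd _ _⟩ ⟨by positivity,
      fun z => ((3 * R : ℝ) : ℂ)⁻¹ • (aut m α z - b), ?_, ?_, ?_, ?_, ?_⟩
    · intro z hz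
      have h1 : DifferentiableAt ℂ (fun z => aut m α z - b) z :=
        (aut_diff haj (hlast z hz)).sub_const b
      exact (DifferentiableAt.fun_const_smul h1 (((3 * R : ℝ) : ℂ)⁻¹)).differentiableWithinAt
    · intro z hz w hw h
      have hne : ((3 * R : ℝ) : ℂ)⁻¹ ≠ 0 := inv_ne_zero (by exact_mod_cast hS.ne')
      have h1 := smul_right_injective _ hne h
      exact aut_inj haj (hlast z hz) (hlast w hw) (sub_left_injective h1)
    · rintro _ ⟨z, hz, rfl⟩
      have h1 := hbd _ ((aut_mem hm hP haj (hlast z hz)).2 hz)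
      have h2 := hbd _ hbD
      have h3 := norm_sub_le (aut m α z) b
      rw [mem_ball_zero_iff, norm_smul, norm_inv, Complex.norm_real, Real.norm_of_nonneg hS.le,
        inv_mul_lt_iff₀ hS]
      linarith
    · simp [hb]
    · intro w hw
      rw [mem_ball_zero_iff, lt_div_iff₀ hS] at hw
      have hmem : b + ((3 * R : ℝ) : ℂ) • w ∈ DP P := by
        apply hball b hbK
        rw [mem_ball_iff_norm, add_sub_cancel_left, norm_smul, Complex.norm_real,
          Real.norm_of_nonneg hS.le]
        linarith
      obtain ⟨z, hz, hzw⟩ := aut_surj (m := m) haj (hlast _ hmem)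
      refine ⟨z, (aut_mem hm hP haj hz).1 (hzw ▸ hmem), ?_⟩
      have hne : ((3 * R : ℝ) : ℂ) ≠ 0 := by exact_mod_cast hS.ne'
      simp only [hzw, add_sub_cancel_left]
      rw [smul_smul, inv_mul_cancel₀ hne, one_smul]
  refine lt_of_lt_of_le (show 0 < δ / (3 * R) by positivity) ?_
  refine Filter.le_liminf_of_le ?_ (Filter.Eventually.of_forall main)
  refine Filter.IsBoundedUnder.isCoboundedUnder_ge ⟨1, ?_⟩
  refine Filter.eventually_map.2 (Filter.Eventually.of_forall fun j => ?_)
  exact Real.sSup_le (sqf_bdd _ _) zero_le_one
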